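/- arXiv:0803.0703 — 3 statements merged into one kernel-verified Lean document; each statement's English description precedes it below -/
import Mathlib

section
/- Let X be a ℂ^k-valued map analytic on a neighborhood of 0 in ℂ^k with X(0) = 0, let L = DX(0), and let λ₁, …, λ_k be the eigenvalues of L listed with multiplicity. Assume (i) (Poincaré domain) 0 does not belong to the convex hull of {λ₁, …, λ_k} in ℂ, and (ii) (nonresonance) for every multi-index m ∈ ℕ^k with |m| ≥ 2 and every j ∈ {1, …, k} one has ⟨m, λ⟩ ≠ λ_j. Then X is holomorphically linearizable: there exist a neighborhood V of 0 and an analytic map φ : V → ℂ^k with φ(0) = 0, Dφ(0) = Id, and Dφ(z)(L z) = X(φ(z)) for all z ∈ V. -/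
/-!
The linearizing map is sought as a power series `φ = ∑ qₙ` with `q₀ = 0`, `q₁ = id`. Writing
`X = ∑ pₙ` with `p₁ = L`, the equation `Dφ(z)(L z) = X(φ z)` reads, in degree `n ≥ 2`,
`Aₙ qₙ = ∑ p_j(q_{i₁}, …, q_{i_j})`, the sum running over the compositions of `n` of length
`j ≥ 2`, where `Aₙ q = ∑ᵢ q(…, L vᵢ, …) - L q(v)` is the homological operator (`homological`).
It is considered on all continuous `n`-linear maps, symmetric or not.

* `Aₙ` is invertible for `n ≥ 2` (`homological_injective`): it is a sum of commuting operators,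
  so its eigenvalues are of the form `λ_{i₁} + ⋯ + λ_{iₙ} - λ_j`, and these are nonzero by
  nonresonance. `L` need not be diagonalizable.
* The inverses are bounded uniformly in `n` (`exists_bounded_inverse`). By the Poincaré condition
  there is `σ ≠ 0` with `|1 + σ λᵢ| < 1` for all `i` (`exists_sigma`); hence `T = 1 + σ L` has
  spectral radius `< 1` and `‖T‖ < 1` for an equivalent norm (`exists_adapted_norm`). Inserting `T`
  in each slot of `q` and summing gives `∑ᵢ q(…, T vᵢ, …) = n q + σ L q + σ Aₙ q`, whose left side
  has norm at most `n ‖T‖ ‖q‖`; so `‖σ‖ ‖Aₙ q‖ ≥ (n (1 - ‖T‖) - ‖σ‖ ‖L‖) ‖q‖`.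
* With such a bound the series `φ` converges (`linSeries_radius_pos`), by the same majorant argument
  as for the inverse of an analytic map.
* Differentiating `φ` term by term (`eventually_hasSum_fderiv`) and comparing with the power series
  of `X ∘ φ` gives the conjugacy (`linearization_of_contraction`).
-/

open Filter Topology

/-! ### Eigenvalues of sums of commuting operators -/

/-- The eigenspace of `f + g` is stable under `f`; an eigenvector of `f` in it is also one of `g`. -/
theorem eigenvalue_add {V : Type*} [AddCommGroup V] [Module ℂ V] [FiniteDimensional ℂ V]
    {f g : Module.End ℂ V} (hfg : Commute f g) {μ : ℂ} (h : (f + g).HasEigenvalue μ) :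
    ∃ α β : ℂ, f.HasEigenvalue α ∧ g.HasEigenvalue β ∧ α + β = μ := by
  set W := (f + g).eigenspace μ with hW
  have hmaps : ∀ x ∈ W, f x ∈ W := by
    intro x hx
    rw [hW, Module.End.mem_eigenspace_iff] at hx ⊢
    have h1 : (f + g) (f x) = f ((f + g) x) := by
      have : g (f x) = f (g x) := (LinearMap.congr_fun hfg.eq x).symm
      simp [this]
    rw [h1, hx, map_smul]
  have : Nontrivial W := Submodule.nontrivial_iff_ne_bot.mpr h
  obtain ⟨α, hα⟩ := Module.End.exists_eigenvalue (f.restrict hmaps)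
  obtain ⟨⟨v, hvW⟩, hv⟩ := hα.exists_hasEigenvector
  have hv0 : v ≠ 0 := fun h0 => hv.2 (by ext; simpa using h0)
  have hfv : f v = α • v := by simpa using congrArg Subtype.val hv.apply_eq_smul
  refine ⟨α, μ - α, ?_, ?_, by ring⟩
  · exact Module.End.hasEigenvalue_of_hasEigenvector
      ⟨Module.End.mem_eigenspace_iff.mpr hfv, hv0⟩
  · refine Module.End.hasEigenvalue_of_hasEigenvector
      ⟨Module.End.mem_eigenspace_iff.mpr ?_, hv0⟩
    rw [hW, Module.End.mem_eigenspace_iff, LinearMap.add_apply, hfv] at hvW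
    rw [sub_smul, ← hvW]; abel

theorem eigenvalue_sum {V ι : Type*} [AddCommGroup V] [Module ℂ V] [FiniteDimensional ℂ V]
    (f : ι → Module.End ℂ V) (hf : ∀ i j, Commute (f i) (f j)) (s : Finset ι) :
    ∀ {μ : ℂ}, (∑ i ∈ s, f i).HasEigenvalue μ →
      ∃ α : ι → ℂ, (∀ i ∈ s, (f i).HasEigenvalue (α i)) ∧ ∑ i ∈ s, α i = μ := by
  classical
  induction s using Finset.induction_on with
  | empty =>
    intro μ h
    obtain ⟨v, hv⟩ := h.exists_hasEigenvector
    refine ⟨0, by simp, ?_⟩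
    have := hv.apply_eq_smul
    simp only [Finset.sum_empty, LinearMap.zero_apply] at this
    simpa [hv.2, eq_comm] using this
  | insert a s ha ih =>
    intro μ h
    rw [Finset.sum_insert ha] at h
    obtain ⟨α, β, h1, h2, h3⟩ := eigenvalue_add (Commute.sum_right _ _ _ fun j _ => hf a j) h
    obtain ⟨γ, h4, h5⟩ := ih h2
    refine ⟨Function.update γ a α, ?_, ?_⟩
    · intro i hi
      by_cases hia : i = a
      · subst hia; simpa using h1
      · simpa [hia] using h4 i (by simpa [hia] using hi)
    · rw [Finset.sum_insert ha, ← h3, ← h5]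
      simp only [Function.update_self, add_right_inj]
      refine Finset.sum_congr rfl fun i hi => ?_
      rw [Function.update_of_ne]
      rintro rfl; exact ha hi

/-! ### The homological operator on multilinear maps -/

section
variable {F : Type*} [NormedAddCommGroup F] [NormedSpace ℂ F]

/-- `slot T i q` is the multilinear map `v ↦ q (v₁, …, T vᵢ, …, vₙ)`, as an operator in `q`. -/
noncomputable def slot {n : ℕ} (T : F →L[ℂ] F) (i : Fin n) : Module.End ℂ (F [×n]→L[ℂ] F) :=
  (ContinuousMultilinearMap.compContinuousLinearMapL (𝕜 := ℂ) (F := F)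
    (Function.update (fun _ : Fin n => ContinuousLinearMap.id ℂ F) i T)).toLinearMap

theorem slot_apply {n : ℕ} (T : F →L[ℂ] F) (i : Fin n) (q : F [×n]→L[ℂ] F) (v : Fin n → F) :
    slot T i q v = q (Function.update v i (T (v i))) := by
  change q _ = q _
  congr 1
  ext j
  by_cases h : j = i
  · subst h; simp
  · simp [h]

theorem norm_slot_le {n : ℕ} (T : F →L[ℂ] F) (i : Fin n) (q : F [×n]→L[ℂ] F) :
    ‖slot T i q‖ ≤ ‖T‖ * ‖q‖ := by
  refine ContinuousMultilinearMap.opNorm_le_bound (by positivity) fun v => ?_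
  rw [slot_apply]
  refine (q.le_opNorm _).trans ?_
  rw [← Finset.mul_prod_erase _ _ (Finset.mem_univ i), ← Finset.mul_prod_erase _ (fun i => ‖v i‖) (Finset.mem_univ i),
    Function.update_self]
  have h1 : ∏ x ∈ Finset.univ.erase i, ‖Function.update v i (T (v i)) x‖
      = ∏ x ∈ Finset.univ.erase i, ‖v x‖ := by
    refine Finset.prod_congr rfl fun j hj => ?_
    rw [Function.update_of_ne (Finset.ne_of_mem_erase hj)]
  rw [h1]
  calc _ ≤ ‖q‖ * ((‖T‖ * ‖v i‖) * ∏ x ∈ Finset.univ.erase i, ‖v x‖) := by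
        gcongr; exact T.le_opNorm _
    _ = _ := by ring

/-- `post n T q` is the multilinear map `v ↦ T (q v)`, as an operator in `q`. -/
noncomputable def post (n : ℕ) (T : F →L[ℂ] F) : Module.End ℂ (F [×n]→L[ℂ] F) :=
  (ContinuousLinearMap.compContinuousMultilinearMapL ℂ (fun _ : Fin n => F) F F T).toLinearMap

theorem post_apply {n : ℕ} (T : F →L[ℂ] F) (q : F [×n]→L[ℂ] F) (v : Fin n → F) :
    post n T q v = T (q v) := rfl

theorem norm_post_le {n : ℕ} (T : F →L[ℂ] F) (q : F [×n]→L[ℂ] F) :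
    ‖post n T q‖ ≤ ‖T‖ * ‖q‖ := ContinuousLinearMap.norm_compContinuousMultilinearMap_le _ _

/-- The homological operator `q ↦ ∑ᵢ q (v₁, …, L vᵢ, …, vₙ) - L (q v)` on `n`-linear maps. On the
associated homogeneous polynomial maps it is `h ↦ (z ↦ Dh(z)(L z) - L (h z))`. -/
noncomputable def homological (n : ℕ) (L : F →L[ℂ] F) : Module.End ℂ (F [×n]→L[ℂ] F) :=
  ∑ i, slot L i - post n L

theorem homological_apply (n : ℕ) (L : F →L[ℂ] F) (q : F [×n]→L[ℂ] F) (v : Fin n → F) :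
    homological n L q v = ∑ i, q (Function.update v i (L (v i))) - L (q v) := by
  simp [homological, slot_apply, post_apply]

/-- If `1 + σ L` is a strict contraction, the homological operator of degree `n` is bounded below by
a quantity growing linearly in `n`. The bound comes from summing over `i` the maps obtained from
`q` by applying `1 + σ L` in the `i`-th slot. -/
theorem le_norm_homological {n : ℕ} (L : F →L[ℂ] F) (σ : ℂ) (q : F [×n]→L[ℂ] F) :
    n * (1 - ‖ContinuousLinearMap.id ℂ F + σ • L‖) * ‖q‖ - ‖σ‖ * ‖L‖ * ‖q‖
      ≤ ‖σ‖ * ‖homological n L q‖ := by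
  set T := ContinuousLinearMap.id ℂ F + σ • L with hT
  have h1 : ∑ i, slot T i q = (n : ℂ) • q + σ • post n L q + σ • homological n L q := by
    ext v
    simp only [_root_.sum_apply, _root_.add_apply,
      _root_.smul_apply, slot_apply, homological_apply, post_apply, hT]
    simp only [ContinuousLinearMap.id_apply, ContinuousMultilinearMap.map_update_add,
      ContinuousMultilinearMap.map_update_smul, Function.update_eq_self, Finset.sum_add_distrib,
      ← Finset.smul_sum, smul_sub]
    simp [Nat.cast_smul_eq_nsmul]
  have h2 : ‖∑ i, slot T i q‖ ≤ n * (‖T‖ * ‖q‖) := by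
    refine (norm_sum_le _ _).trans ?_
    refine (Finset.sum_le_sum fun i _ => norm_slot_le T i q).trans ?_
    simp
  have h3 : (n : ℂ) • q = ∑ i, slot T i q - σ • post n L q - σ • homological n L q := by
    rw [h1]; abel
  have h4 : ‖(n : ℂ) • q‖ = n * ‖q‖ := by rw [norm_smul]; simp
  have h5 : ‖(n : ℂ) • q‖ ≤ n * (‖T‖ * ‖q‖) + ‖σ‖ * (‖L‖ * ‖q‖) + ‖σ‖ * ‖homological n L q‖ := by
    rw [h3]
    refine (norm_sub_le _ _).trans (add_le_add ((norm_sub_le _ _).trans (add_le_add h2 ?_)) ?_)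
    · rw [norm_smul]; gcongr; exact norm_post_le L q
    · rw [norm_smul]
  rw [h4] at h5
  linarith

theorem finiteDimensional_multilinear [FiniteDimensional ℂ F] (n : ℕ) : FiniteDimensional ℂ (F [×n]→L[ℂ] F) :=
  Module.Finite.of_injective
    (ContinuousMultilinearMap.toMultilinearMapLinear (R' := ℂ) (A := ℂ) (M₁ := fun _ : Fin n => F) (M₂ := F))
    ContinuousMultilinearMap.toMultilinearMap_injective

theorem slot_commute {n : ℕ} (L : F →L[ℂ] F) (i j : Fin n) : Commute (slot L i) (slot L j) := by
  rcases eq_or_ne i j with rfl | h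
  · exact Commute.refl _
  · ext q v
    simp only [Module.End.mul_apply, slot_apply]
    rw [Function.update_of_ne h, Function.update_of_ne h.symm, Function.update_comm h]

theorem slot_post_commute {n : ℕ} (L : F →L[ℂ] F) (i : Fin n) : Commute (slot L i) (post n L) := by
  ext q v
  simp only [Module.End.mul_apply, slot_apply, post_apply]

/-- If `q (…, L vᵢ, …) = μ q (v)`, then `q` vanishes as soon as its `i`-th argument is in the range of
`L - μ`; so `L - μ` is not surjective when `q ≠ 0`. -/
theorem eigenvalue_of_slot [FiniteDimensional ℂ F] {n : ℕ} {L : F →L[ℂ] F} {i : Fin n} {μ : ℂ}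
    (h : (slot L i).HasEigenvalue μ) : Module.End.HasEigenvalue (L : F →ₗ[ℂ] F) μ := by
  by_contra hμ
  rw [Module.End.hasEigenvalue_iff, not_not, Module.End.eigenspace_def] at hμ
  have hsurj := LinearMap.surjective_of_injective (LinearMap.ker_eq_bot.mp hμ)
  obtain ⟨q, hq⟩ := h.exists_hasEigenvector
  refine hq.2 ?_
  ext v
  obtain ⟨w, hw⟩ := hsurj (v i)
  have h1 := congrArg (fun q' : F [×n]→L[ℂ] F => q' (Function.update v i w)) hq.apply_eq_smul
  simp only [slot_apply, Function.update_self, Function.update_idem,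
    _root_.smul_apply] at h1
  have h2 : v = Function.update v i (L w + (-μ) • w) := by
    rw [eq_comm, Function.update_eq_self_iff, ← hw]
    simp [sub_eq_add_neg]
  rw [h2, ContinuousMultilinearMap.map_update_add, ContinuousMultilinearMap.map_update_smul, h1]
  simp

theorem eigenvalue_of_post {n : ℕ} {L : F →L[ℂ] F} {ν : ℂ}
    (h : (post n L).HasEigenvalue ν) : Module.End.HasEigenvalue (L : F →ₗ[ℂ] F) ν := by
  obtain ⟨q, hq⟩ := h.exists_hasEigenvector
  obtain ⟨v, hv⟩ : ∃ v, q v ≠ 0 := by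
    by_contra! hc
    exact hq.2 (by ext v; simp [hc v])
  refine Module.End.hasEigenvalue_of_hasEigenvector (x := q v)
    ⟨Module.End.mem_eigenspace_iff.mpr ?_, hv⟩
  exact congrArg (fun q' : F [×n]→L[ℂ] F => q' v) hq.apply_eq_smul

/-- Nonresonance in degree `n` makes the homological operator injective. -/
theorem homological_injective [FiniteDimensional ℂ F] {n : ℕ} {L : F →L[ℂ] F}
    (hres : ∀ μ : Fin n → ℂ, (∀ i, Module.End.HasEigenvalue (L : F →ₗ[ℂ] F) (μ i)) →
      ∀ ν, Module.End.HasEigenvalue (L : F →ₗ[ℂ] F) ν → ∑ i, μ i ≠ ν) :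
    Function.Injective (homological n L) := by
  have := finiteDimensional_multilinear (F := F) n
  rw [← LinearMap.ker_eq_bot]
  by_contra hker
  have h0 : (∑ i, slot L i + -post n L).HasEigenvalue 0 := by
    rw [← sub_eq_add_neg, Module.End.hasEigenvalue_iff, Module.End.eigenspace_zero]
    exact hker
  have hcomm : Commute (∑ i, slot L i) (-post n L) :=
    (Commute.sum_left _ _ _ fun i _ => slot_post_commute L i).neg_right
  obtain ⟨α, β, hα, hβ, hαβ⟩ := eigenvalue_add hcomm h0
  obtain ⟨μ, hμ, hsum⟩ := eigenvalue_sum (fun i : Fin n => slot L i) (slot_commute L)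
    Finset.univ hα
  have hν : (post n L).HasEigenvalue (-β) := by
    obtain ⟨q, hq⟩ := hβ.exists_hasEigenvector
    refine Module.End.hasEigenvalue_of_hasEigenvector (x := q)
      ⟨Module.End.mem_eigenspace_iff.mpr ?_, hq.2⟩
    have := hq.apply_eq_smul
    rw [LinearMap.neg_apply] at this
    rw [neg_smul, ← this, neg_neg]
  exact hres μ (fun i => eigenvalue_of_slot (hμ i (Finset.mem_univ i))) (-β) (eigenvalue_of_post hν)
    (by rw [hsum]; exact eq_neg_of_add_eq_zero_left hαβ)

/-- The homological equation is solvable in every degree `n ≥ 2`, with a constant independent of `n`: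
`le_norm_homological` deals with the large degrees, finite-dimensionality with the others. -/
theorem exists_bounded_inverse [FiniteDimensional ℂ F] {L : F →L[ℂ] F} {σ : ℂ}
    (hσ : ‖ContinuousLinearMap.id ℂ F + σ • L‖ < 1)
    (hres : ∀ n : ℕ, 2 ≤ n → ∀ μ : Fin n → ℂ,
      (∀ i, Module.End.HasEigenvalue (L : F →ₗ[ℂ] F) (μ i)) →
      ∀ ν, Module.End.HasEigenvalue (L : F →ₗ[ℂ] F) ν → ∑ i, μ i ≠ ν) :
    ∃ C : ℝ, 0 < C ∧ ∀ n : ℕ, 2 ≤ n → ∀ r : F [×n]→L[ℂ] F,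
      ∃ q : F [×n]→L[ℂ] F, homological n L q = r ∧ ‖q‖ ≤ C * ‖r‖ := by
  set a := 1 - ‖ContinuousLinearMap.id ℂ F + σ • L‖ with ha
  have hapos : 0 < a := by linarith
  have hdeg : ∀ n : ℕ, ∃ C : ℝ, 0 < C ∧ (2 ≤ n → ∀ q : F [×n]→L[ℂ] F, ‖q‖ ≤ C * ‖homological n L q‖) := by
    intro n
    by_cases hn : 2 ≤ n
    · have := finiteDimensional_multilinear (F := F) n
      obtain ⟨K, hK, hK'⟩ := (homological n L).exists_antilipschitzWith
        (LinearMap.ker_eq_bot.mpr (homological_injective (hres n hn)))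
      refine ⟨K, hK, fun _ q => ?_⟩
      simpa using hK'.le_mul_dist q 0
    · exact ⟨1, one_pos, fun h => absurd h hn⟩
  choose c hc hc' using hdeg
  obtain ⟨N, hN⟩ := exists_nat_gt ((‖σ‖ * ‖L‖ + 1) / a)
  set C := ‖σ‖ + ∑ n ∈ Finset.range N, c n + 1 with hC
  have hs : 0 ≤ ∑ n ∈ Finset.range N, c n := Finset.sum_nonneg fun n _ => (hc n).le
  have hlow : ∀ n : ℕ, 2 ≤ n → ∀ q : F [×n]→L[ℂ] F, ‖q‖ ≤ C * ‖homological n L q‖ := by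
    intro n hn q
    rcases lt_or_ge n N with h | h
    · refine (hc' n hn q).trans ?_
      gcongr
      have := Finset.single_le_sum (fun n _ => (hc n).le) (Finset.mem_range.mpr h)
      linarith [norm_nonneg σ]
    · have h1 := le_norm_homological L σ q
      rw [← ha] at h1
      have h2 : ‖σ‖ * ‖L‖ + 1 ≤ n * a := by
        rw [div_lt_iff₀ hapos] at hN
        have : (N : ℝ) * a ≤ n * a := by gcongr
        linarith
      have h3 : ‖q‖ ≤ ‖σ‖ * ‖homological n L q‖ := by
        have := mul_le_mul_of_nonneg_right h2 (norm_nonneg q)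
        linarith
      refine h3.trans ?_
      gcongr
      linarith
  refine ⟨C, by positivity, fun n hn r => ?_⟩
  have := finiteDimensional_multilinear (F := F) n
  obtain ⟨q, rfl⟩ := LinearMap.surjective_of_injective (homological_injective (hres n hn)) r
  exact ⟨q, rfl, hlow n hn q⟩
end

/-! ### The linearizing power series -/

section
variable {F : Type*} [NormedAddCommGroup F] [NormedSpace ℂ F]

open FormalMultilinearSeries Finset

/-- The formal linearizing series attached to `p`, where `B n` stands for a right inverse of the
homological operator of degree `n`: `q₀ = 0`, `q₁ = id`, and `qₙ = B n (rₙ)` for `n ≥ 2`, with `rₙ` the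
degree `n` part of `p ∘ (q₁ + ⋯ + q_{n-1})`. See `linSeries_coeff` for the explicit recursion. -/
noncomputable def linSeries (p : FormalMultilinearSeries ℂ F F)
    (B : ∀ n : ℕ, (F [×n]→L[ℂ] F) → (F [×n]→L[ℂ] F)) : FormalMultilinearSeries ℂ F F
  | 0 => 0
  | 1 => (continuousMultilinearCurryFin1 ℂ F F).symm (ContinuousLinearMap.id ℂ F)
  | n + 2 =>
    let q : FormalMultilinearSeries ℂ F F := fun k => if k < n + 2 then linSeries p B k else 0
    B (n + 2) ((p.comp q) (n + 2))

theorem linSeries_zero (p : FormalMultilinearSeries ℂ F F)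
    (B : ∀ n : ℕ, (F [×n]→L[ℂ] F) → (F [×n]→L[ℂ] F)) : linSeries p B 0 = 0 := by rw [linSeries]

theorem linSeries_one (p : FormalMultilinearSeries ℂ F F)
    (B : ∀ n : ℕ, (F [×n]→L[ℂ] F) → (F [×n]→L[ℂ] F)) :
    linSeries p B 1 = (continuousMultilinearCurryFin1 ℂ F F).symm (ContinuousLinearMap.id ℂ F) := by
  rw [linSeries]

/-- Truncating `q` below degree `n` removes from `(p.comp q) n` exactly the term of the composition of
length one. -/
theorem comp_coeff_of_truncation (p q q' : FormalMultilinearSeries ℂ F F) {n : ℕ} (hn : 0 < n)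
    (hlt : ∀ k < n, q' k = q k) (hq' : q' n = 0) :
    p.comp q' n = ∑ c ∈ ({c | 1 < Composition.length c}.toFinset : Finset (Composition n)),
      p.compAlongComposition q c := by
  ext v
  rw [comp_rightInv_aux1 hn, hq']
  have h0 : ((p 1) fun _ : Fin 1 => (0 : F)) = 0 := ContinuousMultilinearMap.map_zero _
  simp only [_root_.zero_apply, h0, add_zero, _root_.sum_apply, compAlongComposition_apply]
  refine sum_congr rfl fun c hc => p.congr rfl fun j hj1 hj2 => ?_
  have : ∀ k, c.blocksFun k < n := by
    simp only [Set.mem_toFinset (s := {c : Composition n | 1 < c.length}),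
      Set.mem_ofPred_eq] at hc
    simp [← Composition.ne_single_iff hn, Composition.eq_single_iff_length, ne_of_gt hc]
  simp [applyComposition, hlt _ (this _)]

theorem linSeries_coeff (p : FormalMultilinearSeries ℂ F F)
    (B : ∀ n : ℕ, (F [×n]→L[ℂ] F) → (F [×n]→L[ℂ] F)) (n : ℕ) (hn : 2 ≤ n) :
    linSeries p B n =
      B n (∑ c ∈ ({c | 1 < Composition.length c}.toFinset : Finset (Composition n)),
            p.compAlongComposition (linSeries p B) c) := by
  match n with
  | 0 => exact False.elim (zero_lt_two.not_ge hn)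
  | 1 => exact False.elim (one_lt_two.not_ge hn)
  | n + 2 =>
    rw [linSeries]
    exact congrArg (B (n + 2)) (comp_coeff_of_truncation p _ _ (by lia)
      (fun k hk => if_pos hk) (if_neg (lt_irrefl _)))

/-- Majorant inequality: `Sₙ₊₁ ≤ I a + I C ∑_{k ≥ 2} (r Sₙ)ᵏ` for `Sₙ = ∑_{1 ≤ k < n} aᵏ ‖qₖ‖`. -/
theorem linSeries_sum_le {n : ℕ} (hn : 2 ≤ n + 1) (p : FormalMultilinearSeries ℂ F F)
    (B : ∀ n : ℕ, (F [×n]→L[ℂ] F) → (F [×n]→L[ℂ] F)) {I r a C : ℝ} (hI : 1 ≤ I)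
    (hB : ∀ n, 2 ≤ n → ∀ s, ‖B n s‖ ≤ I * ‖s‖) (hr : 0 ≤ r) (ha : 0 ≤ a)
    (hC : 0 ≤ C) (hp : ∀ n, ‖p n‖ ≤ C * r ^ n) :
    ∑ k ∈ Ico 1 (n + 1), a ^ k * ‖linSeries p B k‖ ≤
      I * a + I * C * ∑ k ∈ Ico 2 (n + 1),
        (r * ∑ j ∈ Ico 1 n, a ^ j * ‖linSeries p B j‖) ^ k :=
  calc
    ∑ k ∈ Ico 1 (n + 1), a ^ k * ‖linSeries p B k‖ =
        a * ‖linSeries p B 1‖ + ∑ k ∈ Ico 2 (n + 1), a ^ k * ‖linSeries p B k‖ := by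
      simp only [pow_one, show Ico (1 : ℕ) 2 = {1} from Nat.Ico_succ_singleton 1,
        sum_singleton, ← sum_Ico_consecutive _ one_le_two hn]
    _ ≤ a * I +
          ∑ k ∈ Ico 2 (n + 1), a ^ k * (I *
                ∑ c ∈ ({c | 1 < Composition.length c}.toFinset : Finset (Composition k)),
                  C * r ^ c.length * ∏ j, ‖linSeries p B (c.blocksFun j)‖) := by
      refine add_le_add ?_ (sum_le_sum fun j hj => ?_)
      · gcongr
        rw [linSeries_one, LinearIsometryEquiv.norm_map]
        exact ContinuousLinearMap.norm_id_le.trans hI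
      · rw [linSeries_coeff _ _ _ (mem_Ico.1 hj).1]
        gcongr
        refine (hB _ (mem_Ico.1 hj).1 _).trans ?_
        gcongr
        apply (norm_sum_le _ _).trans
        gcongr
        apply (compAlongComposition_norm _ _ _).trans
        gcongr
        apply hp
    _ = I * a + I * C * ∑ k ∈ Ico 2 (n + 1), a ^ k *
          ∑ c ∈ ({c | 1 < Composition.length c}.toFinset : Finset (Composition k)),
            r ^ c.length * ∏ j, ‖linSeries p B (c.blocksFun j)‖ := by
      rw [mul_comm a I, mul_sum]
      congr 1
      refine sum_congr rfl fun k _ => ?_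
      simp_rw [mul_assoc C, ← mul_sum]
      ring
    _ ≤ I * a + I * C *
        ∑ k ∈ Ico 2 (n + 1), (r * ∑ j ∈ Ico 1 n, a ^ j * ‖linSeries p B j‖) ^ k := by
      gcongr _ + _ * _ * ?_
      simp_rw [mul_pow]
      exact radius_right_inv_pos_of_radius_pos_aux1 n (fun k => ‖linSeries p B k‖)
          (fun k => norm_nonneg _) hr ha

theorem linSeries_radius_pos {p : FormalMultilinearSeries ℂ F F}
    {B : ∀ n : ℕ, (F [×n]→L[ℂ] F) → (F [×n]→L[ℂ] F)} {I : ℝ} (hI : 1 ≤ I)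
    (hB : ∀ n, 2 ≤ n → ∀ s, ‖B n s‖ ≤ I * ‖s‖)
    (hp : 0 < p.radius) : 0 < (linSeries p B).radius := by
  obtain ⟨C, r, Cpos, rpos, ple⟩ := le_mul_pow_of_radius_pos p hp
  have hI0 : 0 < I := by linarith
  obtain ⟨a, apos, ha1, ha2⟩ :
    ∃ (a : ℝ) (_ : 0 < a),
      2 * I * C * r ^ 2 * (I + 1) ^ 2 * a ≤ 1 ∧ r * (I + 1) * a ≤ 1 / 2 := by
    refine ⟨min (1 / (2 * I * C * r ^ 2 * (I + 1) ^ 2)) (1 / 2 / (r * (I + 1))), by positivity,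
      ?_, ?_⟩
    · rw [mul_comm, ← le_div_iff₀ (by positivity)]
      exact min_le_left _ _
    · rw [mul_comm, ← le_div_iff₀ (by positivity)]
      exact min_le_right _ _
  -- `Sₙ ≤ (I + 1) a` for all `n`, by induction with the majorant inequality; the choice of `a` makes
  -- the geometric sum at most twice its first term and the quadratic correction at most `a`.
  let S n := ∑ k ∈ Ico 1 n, a ^ k * ‖linSeries p B k‖
  have Snonneg : ∀ n, 0 ≤ S n := fun n => sum_nonneg fun k _ => by positivity
  have IRec : ∀ n, 1 ≤ n → S n ≤ (I + 1) * a := by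
    apply Nat.le_induction
    · simp only [S]
      rw [Ico_eq_empty_of_le (le_refl 1), sum_empty]
      positivity
    · intro n one_le_n hn
      have In : 2 ≤ n + 1 := by lia
      have rSn0 : 0 ≤ r * S n := mul_nonneg rpos.le (Snonneg n)
      have rSn : r * S n ≤ 1 / 2 :=
        calc
          r * S n ≤ r * ((I + 1) * a) := by gcongr
          _ ≤ 1 / 2 := by rwa [← mul_assoc]
      calc
        S (n + 1) ≤ I * a + I * C * ∑ k ∈ Ico 2 (n + 1), (r * S n) ^ k :=
          linSeries_sum_le In p B hI hB rpos.le apos.le Cpos.le ple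
        _ = I * a + I * C * (((r * S n) ^ 2 - (r * S n) ^ (n + 1)) / (1 - r * S n)) := by
          rw [geom_sum_Ico' _ In]; exact ne_of_lt (rSn.trans_lt (by norm_num))
        _ ≤ I * a + I * C * ((r * S n) ^ 2 / (1 / 2)) := by
          gcongr
          · simp only [sub_le_self_iff]
            positivity
          · linarith only [rSn]
        _ = I * a + 2 * I * C * (r * S n) ^ 2 := by ring
        _ ≤ I * a + 2 * I * C * (r * ((I + 1) * a)) ^ 2 := by gcongr
        _ = (I + 2 * I * C * r ^ 2 * (I + 1) ^ 2 * a) * a := by ring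
        _ ≤ (I + 1) * a := by gcongr
  let a' : NNReal := ⟨a, apos.le⟩
  suffices H : (a' : ENNReal) ≤ (linSeries p B).radius by
    apply lt_of_lt_of_le _ H
    simpa only [ENNReal.coe_pos]
  apply le_radius_of_eventually_le _ ((I + 1) * a)
  filter_upwards [Ici_mem_atTop 1] with n (hn : 1 ≤ n)
  calc
    ‖linSeries p B n‖ * (a' : ℝ) ^ n = a ^ n * ‖linSeries p B n‖ := mul_comm _ _
    _ ≤ ∑ k ∈ Ico 1 (n + 1), a ^ k * ‖linSeries p B k‖ :=
      (haveI : ∀ k ∈ Ico 1 (n + 1), 0 ≤ a ^ k * ‖linSeries p B k‖ := fun k _ => by positivity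
      single_le_sum this (by simp [hn]))
    _ ≤ (I + 1) * a := IRec (n + 1) (by simp)

theorem norm_diag_update_le {n : ℕ} (q : F [×n]→L[ℂ] F) (z w : F) :
    ‖∑ i, q (Function.update (fun _ => z) i w)‖ ≤ n * ‖q‖ * ‖z‖ ^ (n - 1) * ‖w‖ := by
  refine (norm_sum_le _ _).trans ?_
  have : ∀ i : Fin n, ‖q (Function.update (fun _ => z) i w)‖ ≤ ‖q‖ * ‖z‖ ^ (n - 1) * ‖w‖ := by
    intro i
    refine (q.le_opNorm _).trans (le_of_eq ?_)
    rw [← Finset.mul_prod_erase _ _ (Finset.mem_univ i), Function.update_self]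
    have h1 : ∏ x ∈ Finset.univ.erase i, ‖Function.update (fun _ : Fin n => z) i w x‖
        = ∏ x ∈ Finset.univ.erase i, ‖z‖ := by
      refine Finset.prod_congr rfl fun j hj => ?_
      rw [Function.update_of_ne (Finset.ne_of_mem_erase hj)]
    rw [h1, prod_const, card_erase_of_mem (mem_univ i), card_univ, Fintype.card_fin]
    ring
  refine (Finset.sum_le_sum fun i _ => this i).trans ?_
  simp only [sum_const, card_univ, Fintype.card_fin, nsmul_eq_mul]
  apply le_of_eq; ring

/-- Term-by-term differentiation of a convergent power series, in terms of its multilinear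
coefficients (which need not be symmetric). -/
theorem eventually_hasSum_fderiv [CompleteSpace F] {q : FormalMultilinearSeries ℂ F F}
    (hq : 0 < q.radius) :
    ∀ᶠ z in 𝓝 (0 : F), ∀ w, HasSum
      (fun n => ∑ i, q n (Function.update (fun _ => z) i w)) (fderiv ℂ q.sum z w) := by
  obtain ⟨C, r, Cpos, rpos, hle⟩ := le_mul_pow_of_radius_pos q hq
  -- On the ball of radius `1 / (2r)` the derivative of the `n`-th term is at most
  -- `n C rⁿ (1 / (2r))ⁿ⁻¹ = 2 C r n 2⁻ⁿ`.
  set ρ : ℝ := 1 / (2 * r) with hρ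
  have hρpos : 0 < ρ := by positivity
  let f' : ℕ → F → F →L[ℂ] F := fun n z =>
    ((q n).linearDeriv fun _ => z).comp (ContinuousLinearMap.pi fun _ => ContinuousLinearMap.id ℂ F)
  have hf'apply : ∀ n z w, f' n z w = ∑ i, q n (Function.update (fun _ => z) i w) := by
    intro n z w
    simp [f', ContinuousMultilinearMap.linearDeriv_apply]
  let u : ℕ → ℝ := fun n => 2 * C * r * ((n : ℝ) ^ 1 * (1 / 2 : ℝ) ^ n)
  have hu : Summable u :=
    (summable_pow_mul_geometric_of_norm_lt_one 1 (by norm_num : ‖(1 / 2 : ℝ)‖ < 1)).mul_left _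
  have hder : ∀ n z, z ∈ Metric.ball (0 : F) ρ →
      HasFDerivAt (fun z => q n fun _ => z) (f' n z) z := by
    intro n z _
    exact ((q n).hasFDerivAt (fun _ => z)).comp z
      (ContinuousLinearMap.pi fun _ : Fin n => ContinuousLinearMap.id ℂ F).hasFDerivAt
  have hbound : ∀ n z, z ∈ Metric.ball (0 : F) ρ → ‖f' n z‖ ≤ u n := by
    intro n z hz
    rw [mem_ball_zero_iff] at hz
    refine ContinuousLinearMap.opNorm_le_bound _ (by positivity) fun w => ?_
    rw [hf'apply]
    refine (norm_diag_update_le _ _ _).trans ?_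
    gcongr
    rcases n with _ | n
    · simp [u]
    · calc ((n + 1 : ℕ) : ℝ) * ‖q (n + 1)‖ * ‖z‖ ^ (n + 1 - 1)
          ≤ ((n + 1 : ℕ) : ℝ) * (C * r ^ (n + 1)) * ρ ^ n := by
            rw [Nat.add_sub_cancel]
            gcongr
            exact hle _
        _ = u (n + 1) := by
            simp only [u, hρ, div_pow, mul_pow, one_pow]
            field_simp
            ring
  have hball : Metric.ball (0 : F) ρ ∈ 𝓝 (0 : F) := Metric.ball_mem_nhds _ hρpos
  filter_upwards [hball] with z hz w
  let : NormedSpace ℝ F := NormedSpace.restrictScalars ℝ ℂ F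
  have hpre : IsPreconnected (Metric.ball (0 : F) ρ) := (convex_ball (0 : F) ρ).isPreconnected
  have hsum0 : Summable fun n => q n fun _ => (0 : F) :=
    summable_of_ne_finset_zero (s := {0}) fun n hn => by
      have : NeZero n := ⟨by simpa using hn⟩
      exact (q n).map_zero
  have hD := hasFDerivAt_tsum_of_isPreconnected hu Metric.isOpen_ball hpre hder hbound
    (Metric.mem_ball_self hρpos) hsum0 hz
  have hs : Summable fun n => f' n z := Summable.of_norm_bounded hu fun n => hbound n z hz
  have hfd : fderiv ℂ q.sum z = ∑' n, f' n z := hD.fderiv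
  rw [hfd]
  have := (ContinuousLinearMap.apply ℂ F w).hasSum hs.hasSum
  simpa [Function.comp_def, hf'apply] using this

/-- Poincaré's theorem when the given norm already makes `1 + σ L` a strict contraction. -/
theorem linearization_of_contraction [FiniteDimensional ℂ F] {X : F → F} {L : F →L[ℂ] F} {σ : ℂ}
    (hX : AnalyticAt ℂ X 0) (hX0 : X 0 = 0) (hL : fderiv ℂ X 0 = L)
    (hσ : ‖ContinuousLinearMap.id ℂ F + σ • L‖ < 1)
    (hres : ∀ n : ℕ, 2 ≤ n → ∀ μ : Fin n → ℂ,
      (∀ i, Module.End.HasEigenvalue (L : F →ₗ[ℂ] F) (μ i)) →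
      ∀ ν, Module.End.HasEigenvalue (L : F →ₗ[ℂ] F) ν → ∑ i, μ i ≠ ν) :
    ∃ φ : F → F, AnalyticAt ℂ φ 0 ∧ φ 0 = 0 ∧ fderiv ℂ φ 0 = ContinuousLinearMap.id ℂ F ∧
      ∀ᶠ z in 𝓝 (0 : F), fderiv ℂ φ z (L z) = X (φ z) := by
  have : CompleteSpace F := FiniteDimensional.complete ℂ F
  obtain ⟨C, hC, hsolve⟩ := exists_bounded_inverse hσ hres
  have hsolve' : ∀ n : ℕ, ∀ r : F [×n]→L[ℂ] F, ∃ q : F [×n]→L[ℂ] F,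
      2 ≤ n → homological n L q = r ∧ ‖q‖ ≤ C * ‖r‖ := by
    intro n r
    by_cases hn : 2 ≤ n
    · obtain ⟨q, hq⟩ := hsolve n hn r
      exact ⟨q, fun _ => hq⟩
    · exact ⟨0, fun h => absurd h hn⟩
  choose B hB using hsolve'
  obtain ⟨p, hp⟩ := hX
  have hprad : 0 < p.radius := hp.radius_pos
  set q := linSeries p B with hq
  have hqrad : 0 < q.radius := by
    refine linSeries_radius_pos (I := C + 1) (by linarith) (fun n hn s => ?_) hprad
    refine (hB n s hn).2.trans ?_
    gcongr
    linarith
  have hφ : HasFPowerSeriesAt q.sum q 0 := (q.hasFPowerSeriesOnBall hqrad).hasFPowerSeriesAt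
  have hφ0 : q.sum 0 = 0 := by
    rw [← hφ.coeff_zero (fun _ => 0), hq, linSeries_zero]; rfl
  refine ⟨q.sum, hφ.analyticAt, hφ0, ?_, ?_⟩
  · rw [hφ.fderiv_eq, hq, linSeries_one, LinearIsometryEquiv.apply_symm_apply]
  have hp1 : ∀ v : F, p 1 (fun _ => v) = L v := by
    intro v
    rw [← hL, hp.fderiv_eq]
    rfl
  have hcomp : HasFPowerSeriesAt (X ∘ q.sum) (p.comp q) 0 :=
    HasFPowerSeriesAt.comp (by rwa [hφ0]) hφ
  filter_upwards [hcomp.eventually_hasSum, eventually_hasSum_fderiv hqrad] with z hz1 hz2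
  rw [zero_add] at hz1
  -- Both sides are sums of power series at `z`, which agree degree by degree.
  refine (hz2 (L z)).unique ?_
  change HasSum _ ((X ∘ q.sum) z)
  convert hz1 using 2 with n
  rcases Nat.eq_zero_or_pos n with rfl | hn
  · rw [comp_coeff_zero' , hp.coeff_zero, hX0]
    simp
  · rw [comp_rightInv_aux1 hn, hp1]
    rcases Nat.lt_or_ge n 2 with h2 | h2
    · obtain rfl : n = 1 := by lia
      have hempty : ({c : Composition 1 | 1 < c.length}.toFinset : Finset (Composition 1)) = ∅ := by
        ext c
        have := c.length_le
        simp
      rw [hempty, sum_empty, hq, linSeries_one]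
      simp
    · have h3 := (hB n (∑ c ∈ ({c | 1 < Composition.length c}.toFinset : Finset (Composition n)),
            p.compAlongComposition q c) h2).1
      rw [hq, ← linSeries_coeff p B n h2, ← hq] at h3
      have h4 := congrArg (fun s : F [×n]→L[ℂ] F => s fun _ => z) h3
      simp only [homological_apply, _root_.sum_apply, compAlongComposition_apply] at h4
      rw [← h4, sub_add_cancel]
end

/-! ### Adapted norm and change of coordinates -/

section
variable {E : Type*} [NormedAddCommGroup E] [NormedSpace ℂ E]

/-- Gelfand's formula, for an operator whose spectrum is in the open unit disc. -/
theorem exists_pow_norm_lt [CompleteSpace E] [Nontrivial E] {T : E →L[ℂ] E}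
    (hT : ∀ t ∈ spectrum ℂ T, ‖t‖ < 1) :
    ∃ (M : ℕ) (c : ℝ), 0 < M ∧ 0 < c ∧ c < 1 ∧ ‖T ^ M‖ ≤ c ^ M := by
  have h1 : spectralRadius ℂ T < ((1 : NNReal) : ENNReal) :=
    spectrum.spectralRadius_lt_of_forall_lt T fun t ht => by
      rw [← NNReal.coe_lt_coe]; simpa using hT t ht
  obtain ⟨c, hc1, hc2⟩ := ENNReal.lt_iff_exists_nnreal_btwn.mp h1
  have h2 := (spectrum.pow_nnnorm_pow_one_div_tendsto_nhds_spectralRadius T).eventually_lt_const hc1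
  obtain ⟨M, hM1, hM2⟩ := (h2.and (eventually_gt_atTop 0)).exists
  have hM0 : (0 : ℝ) < M := by exact_mod_cast hM2
  refine ⟨M, c, hM2, ?_, by exact_mod_cast hc2, ?_⟩
  · have : (0 : ENNReal) < c := lt_of_le_of_lt bot_le hc1
    exact_mod_cast this
  · have h3 := ENNReal.rpow_le_rpow hM1.le hM0.le
    rw [← ENNReal.rpow_mul, one_div_mul_cancel hM0.ne', ENNReal.rpow_one, ENNReal.rpow_natCast] at h3
    have h4 : ‖T ^ M‖₊ ≤ c ^ M := by exact_mod_cast h3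
    exact_mod_cast h4

/-- An operator with spectrum in the open unit disc is a strict contraction for an equivalent norm.
The norm is `max_{j < M} c⁻ʲ ‖Tʲ x‖`, realized by embedding `E` in `Fin M → E` through
`x ↦ (c⁻ʲ Tʲ x)ⱼ` and restricting the sup norm to the range `S` of this embedding. -/
theorem exists_adapted_norm [FiniteDimensional ℂ E] [Nontrivial E] {T : E →L[ℂ] E}
    (hT : ∀ t ∈ spectrum ℂ T, ‖t‖ < 1) :
    ∃ (M : ℕ) (S : Submodule ℂ (Fin M → E)) (e : E ≃L[ℂ] S),
      ‖((e : E →L[ℂ] S).comp T).comp (e.symm : S →L[ℂ] E)‖ < 1 := by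
  have : CompleteSpace E := FiniteDimensional.complete ℂ E
  obtain ⟨M, c, hM, hc0, hc1, hTM⟩ := exists_pow_norm_lt hT
  let J : E →ₗ[ℂ] (Fin M → E) :=
    LinearMap.pi fun j => (((c : ℂ)⁻¹ ^ (j : ℕ)) • T ^ (j : ℕ) : E →L[ℂ] E).toLinearMap
  have hJ : ∀ x j, J x j = ((c : ℂ)⁻¹ ^ (j : ℕ)) • (T ^ (j : ℕ)) x := fun x j => rfl
  have hJn : ∀ x (j : Fin M), ‖J x j‖ = c⁻¹ ^ (j : ℕ) * ‖(T ^ (j : ℕ)) x‖ := by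
    intro x j
    rw [hJ, norm_smul, norm_pow, norm_inv, Complex.norm_real, Real.norm_of_nonneg hc0.le]
  have hinj : Function.Injective J := by
    intro x y hxy
    have := congrFun hxy ⟨0, hM⟩
    simpa [hJ] using this
  let e : E ≃L[ℂ] LinearMap.range J := (LinearEquiv.ofInjective J hinj).toContinuousLinearEquiv
  have he : ∀ x, ((e x : LinearMap.range J) : Fin M → E) = J x := fun x => rfl
  have hen : ∀ x, ‖e x‖ = ‖J x‖ := fun x => by rw [← he]; rfl
  have key : ∀ x, ‖J (T x)‖ ≤ c * ‖J x‖ := by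
    intro x
    refine (pi_norm_le_iff_of_nonneg (by positivity)).mpr fun j => ?_
    rw [hJn]
    have hsucc : (T ^ (j : ℕ)) (T x) = (T ^ ((j : ℕ) + 1)) x := by
      rw [pow_succ]; rfl
    rw [hsucc]
    rcases Nat.lt_or_ge ((j : ℕ) + 1) M with h | h
    · have h1 := norm_le_pi_norm (J x) ⟨(j : ℕ) + 1, h⟩
      rw [hJn] at h1
      calc c⁻¹ ^ (j : ℕ) * ‖(T ^ ((j : ℕ) + 1)) x‖
          = c * (c⁻¹ ^ ((j : ℕ) + 1) * ‖(T ^ ((j : ℕ) + 1)) x‖) := by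
            rw [pow_succ c⁻¹]; field_simp
        _ ≤ _ := by gcongr
    · -- Last coordinate: `c⁻⁽ᴹ⁻¹⁾ ‖Tᴹ x‖ ≤ c ‖x‖`, and `‖x‖` is the norm of the coordinate `0`.
      have hjM : (j : ℕ) + 1 = M := le_antisymm j.2 h
      have h1 := norm_le_pi_norm (J x) ⟨0, hM⟩
      rw [hJn] at h1
      simp only [pow_zero, one_mul, one_apply_eq_self] at h1
      calc c⁻¹ ^ (j : ℕ) * ‖(T ^ ((j : ℕ) + 1)) x‖
          ≤ c⁻¹ ^ (j : ℕ) * (c ^ ((j : ℕ) + 1) * ‖x‖) := by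
            gcongr
            refine (ContinuousLinearMap.le_opNorm _ _).trans ?_
            gcongr
            rw [hjM]; exact hTM
        _ = c * ‖x‖ := by
            rw [pow_succ, inv_pow]; field_simp
        _ ≤ _ := by gcongr
  refine ⟨M, LinearMap.range J, e, lt_of_le_of_lt
    (ContinuousLinearMap.opNorm_le_bound _ hc0.le fun y => ?_) hc1⟩
  obtain ⟨x, rfl⟩ := e.surjective y
  simp only [ContinuousLinearMap.comp_apply, ContinuousLinearEquiv.coe_coe,
    ContinuousLinearEquiv.symm_apply_apply, hen]
  exact key x

theorem hasEigenvalue_of_mem_spectrum [FiniteDimensional ℂ E] {T : E →L[ℂ] E} {t : ℂ}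
    (ht : t ∈ spectrum ℂ T) : Module.End.HasEigenvalue (T : E →ₗ[ℂ] E) t := by
  have : CompleteSpace E := FiniteDimensional.complete ℂ E
  by_contra h
  rw [Module.End.hasEigenvalue_iff, not_not, Module.End.eigenspace_def] at h
  have hinj := LinearMap.ker_eq_bot.mp h
  have hsurj := LinearMap.surjective_of_injective hinj
  refine ht ?_
  rw [spectrum.mem_resolventSet_iff, ← neg_sub, IsUnit.neg_iff, ContinuousLinearMap.isUnit_iff_bijective]
  exact ⟨hinj, hsurj⟩

/-- `linearization_of_contraction` transported by the linear change of coordinates of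
`exists_adapted_norm`. -/
theorem linearization_of_spectrum [FiniteDimensional ℂ E] [Nontrivial E] {X : E → E}
    {L : E →L[ℂ] E} {σ : ℂ}
    (hX : AnalyticAt ℂ X 0) (hX0 : X 0 = 0) (hL : fderiv ℂ X 0 = L)
    (hσ : ∀ t ∈ spectrum ℂ (ContinuousLinearMap.id ℂ E + σ • L), ‖t‖ < 1)
    (hres : ∀ n : ℕ, 2 ≤ n → ∀ μ : Fin n → ℂ,
      (∀ i, Module.End.HasEigenvalue (L : E →ₗ[ℂ] E) (μ i)) →
      ∀ ν, Module.End.HasEigenvalue (L : E →ₗ[ℂ] E) ν → ∑ i, μ i ≠ ν) :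
    ∃ φ : E → E, AnalyticAt ℂ φ 0 ∧ φ 0 = 0 ∧ fderiv ℂ φ 0 = ContinuousLinearMap.id ℂ E ∧
      ∀ᶠ z in 𝓝 (0 : E), fderiv ℂ φ z (L z) = X (φ z) := by
  obtain ⟨M, S, e, he⟩ := exists_adapted_norm hσ
  set L' : S →L[ℂ] S := ((e : E →L[ℂ] S).comp L).comp (e.symm : S →L[ℂ] E) with hL'
  have hT' : ((e : E →L[ℂ] S).comp (ContinuousLinearMap.id ℂ E + σ • L)).comp
      (e.symm : S →L[ℂ] E) = ContinuousLinearMap.id ℂ S + σ • L' := by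
    ext1 y
    simp [hL']
  rw [hT'] at he
  have heig : ∀ μ, Module.End.HasEigenvalue (L' : S →ₗ[ℂ] S) μ →
      Module.End.HasEigenvalue (L : E →ₗ[ℂ] E) μ := by
    intro μ h
    obtain ⟨y, hy⟩ := h.exists_hasEigenvector
    refine Module.End.hasEigenvalue_of_hasEigenvector (x := e.symm y)
      ⟨Module.End.mem_eigenspace_iff.mpr ?_, by simpa using hy.2⟩
    have h1 : e (L (e.symm y)) = μ • y := hy.apply_eq_smul
    have h2 := congrArg e.symm h1
    simpa using h2
  have hXd : HasFDerivAt X L (e.symm (0 : S)) := by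
    rw [map_zero, ← hL]; exact hX.differentiableAt.hasFDerivAt
  have hYd : HasFDerivAt (fun y : S => e (X (e.symm y))) L' 0 := by
    have h1 : HasFDerivAt (fun y : S => X (e.symm y)) (L.comp (e.symm : S →L[ℂ] E)) 0 :=
      HasFDerivAt.comp (0 : S) hXd e.symm.hasFDerivAt
    exact (e : E →L[ℂ] S).hasFDerivAt.comp (0 : S) h1
  have hYa : AnalyticAt ℂ (fun y : S => e (X (e.symm y))) 0 := by
    have h1 : AnalyticAt ℂ (fun y : S => X (e.symm y)) 0 :=
      AnalyticAt.comp (by simpa using hX) ((e.symm : S →L[ℂ] E).analyticAt 0)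
    exact AnalyticAt.comp ((e : E →L[ℂ] S).analyticAt _) h1
  obtain ⟨ψ, hψa, hψ0, hψd, hψ⟩ := linearization_of_contraction hYa (by simp [hX0]) hYd.fderiv he
    (fun n hn μ hμ ν hν => hres n hn μ (fun i => heig _ (hμ i)) ν (heig _ hν))
  have hcont : Tendsto e (𝓝 0) (𝓝 0) := by
    simpa using e.continuous.tendsto 0
  have hder : ∀ z, DifferentiableAt ℂ ψ (e z) → HasFDerivAt (fun z => e.symm (ψ (e z)))
      ((e.symm : S →L[ℂ] E).comp ((fderiv ℂ ψ (e z)).comp (e : E →L[ℂ] S))) z := by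
    intro z hz
    have h1 : HasFDerivAt (fun z => ψ (e z)) ((fderiv ℂ ψ (e z)).comp (e : E →L[ℂ] S)) z :=
      HasFDerivAt.comp z hz.hasFDerivAt e.hasFDerivAt
    exact HasFDerivAt.comp z e.symm.hasFDerivAt h1
  refine ⟨fun z => e.symm (ψ (e z)), ?_, by simp [hψ0], ?_, ?_⟩
  · have h1 : AnalyticAt ℂ (fun z => ψ (e z)) 0 :=
      AnalyticAt.comp (by simpa using hψa) ((e : E →L[ℂ] S).analyticAt 0)
    exact AnalyticAt.comp ((e.symm : S →L[ℂ] E).analyticAt _) h1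
  · rw [(hder 0 (by simpa using hψa.differentiableAt)).fderiv, map_zero, hψd]
    ext1 y
    simp
  · filter_upwards [hcont.eventually hψ, hcont.eventually hψa.eventually_analyticAt] with z h1 h2
    rw [(hder z h2.differentiableAt).fderiv]
    have h3 := congrArg e.symm h1
    simpa [hL'] using h3
end

/-! ### The Poincaré condition -/

/-- A real functional `f = Re (c ·)` negative on the eigenvalues is found by separation, and
`σ = s c` with `s > 0` small works since `|1 + s c λ|² = 1 + 2 s f(λ) + s² |c λ|²`. -/
theorem exists_sigma {k : ℕ} {lam : Fin k → ℂ}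
    (h : (0 : ℂ) ∉ convexHull ℝ (Set.range lam)) :
    ∃ σ : ℂ, σ ≠ 0 ∧ ∀ i, ‖1 + σ * lam i‖ < 1 := by
  have hclosed : IsClosed (convexHull ℝ (Set.range lam)) :=
    ((Set.finite_range lam).isCompact_convexHull (𝕜 := ℝ)).isClosed
  obtain ⟨f, u, hfu, hu⟩ :=
    geometric_hahn_banach_closed_point (convex_convexHull ℝ (Set.range lam)) hclosed h
  rw [map_zero] at hu
  have hneg : ∀ i, f (lam i) < 0 := fun i =>
    (hfu _ (subset_convexHull ℝ _ (Set.mem_range_self i))).trans hu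
  set c : ℂ := ⟨f 1, -f Complex.I⟩ with hc
  have hcf : ∀ z : ℂ, (c * z).re = f z := by
    intro z
    have hz : z = z.re • (1 : ℂ) + z.im • Complex.I := by
      apply Complex.ext <;> simp
    conv_rhs => rw [hz, map_add, map_smul, map_smul]
    simp [hc]
    ring
  rcases isEmpty_or_nonempty (Fin k) with hk | ⟨⟨i₀⟩⟩
  · exact ⟨1, one_ne_zero, fun i => (hk.false i).elim⟩
  have hc0 : c ≠ 0 := by
    intro h0
    have := hneg i₀
    rw [← hcf, h0] at this
    simp at this
  have hev : ∀ᶠ s : ℝ in 𝓝[>] 0, ∀ i, s * Complex.normSq (c * lam i) < -2 * f (lam i) := by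
    rw [eventually_all]
    intro i
    have h1 : Tendsto (fun s : ℝ => s * Complex.normSq (c * lam i)) (𝓝[>] 0)
        (𝓝 (0 * Complex.normSq (c * lam i))) :=
      (tendsto_nhdsWithin_of_tendsto_nhds tendsto_id).mul_const _
    rw [zero_mul] at h1
    exact h1.eventually_lt_const (by linarith [hneg i])
  obtain ⟨s, hs, hspos⟩ := (hev.and self_mem_nhdsWithin).exists
  have hspos : 0 < s := hspos
  refine ⟨s * c, mul_ne_zero (by exact_mod_cast hspos.ne') hc0, fun i => ?_⟩
  have h1 : ‖1 + s * c * lam i‖ ^ 2 < 1 := by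
    rw [← Complex.normSq_eq_norm_sq, mul_assoc, Complex.normSq_add, Complex.normSq_mul,
      Complex.normSq_ofReal]
    have h2 : (1 * (starRingEnd ℂ) (s * (c * lam i))).re = s * f (lam i) := by
      rw [one_mul, Complex.conj_re, Complex.re_ofReal_mul, hcf]
    rw [h2, Complex.normSq_one]
    have := mul_lt_mul_of_pos_left (hs i) hspos
    linarith
  exact (sq_lt_one_iff₀ (norm_nonneg _)).mp h1

/-- **Poincaré's linearization theorem.** If a germ of a holomorphic vector field
`X` at `0 ∈ ℂᵏ` with `X 0 = 0` has linear part `L = DX(0)` whose eigenvalues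
`λ₁, …, λ_k` (listed with multiplicity via the characteristic polynomial) satisfy
(i) the Poincaré-domain condition (`0` is not in the convex hull of the eigenvalues) and
(ii) the nonresonance condition (`⟨m, λ⟩ ≠ λ_j` for all multi-indices `m` with `|m| ≥ 2`),
then `X` is holomorphically linearizable. -/
theorem poincare_linearization
    (k : ℕ) (X : (Fin k → ℂ) → (Fin k → ℂ))
    (hX : AnalyticAt ℂ X 0) (hX0 : X 0 = 0)
    (L : (Fin k → ℂ) →L[ℂ] (Fin k → ℂ)) (hL : L = fderiv ℂ X 0)
    (lam : Fin k → ℂ)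
    (hlam : Matrix.charpoly (LinearMap.toMatrix'
        (L : (Fin k → ℂ) →ₗ[ℂ] (Fin k → ℂ)))
      = ∏ i, (Polynomial.X - Polynomial.C (lam i)))
    (hPoincare : (0 : ℂ) ∉ convexHull ℝ (Set.range lam))
    (hNonres : ∀ m : Fin k → ℕ, 2 ≤ ∑ i, m i →
      ∀ j, (∑ i, (m i : ℂ) * lam i) ≠ lam j) :
    ∃ (V : Set (Fin k → ℂ)) (φ : (Fin k → ℂ) → (Fin k → ℂ)),
      V ∈ nhds (0 : Fin k → ℂ) ∧
      AnalyticOnNhd ℂ φ V ∧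
      φ 0 = 0 ∧
      fderiv ℂ φ 0 = ContinuousLinearMap.id ℂ (Fin k → ℂ) ∧
      ∀ z ∈ V, fderiv ℂ φ z (L z) = X (φ z) := by
  classical
  -- `k = 0` is separate: the spectrum of an operator on the zero space is empty.
  rcases subsingleton_or_nontrivial (Fin k → ℂ) with hsub | hnt
  · exact ⟨Set.univ, id, Filter.univ_mem, analyticOnNhd_id, rfl, fderiv_id,
      fun z _ => Subsingleton.elim _ _⟩
  have heig : ∀ μ, Module.End.HasEigenvalue (L : (Fin k → ℂ) →ₗ[ℂ] (Fin k → ℂ)) μ →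
      ∃ j, μ = lam j := by
    intro μ hμ
    rw [Module.End.hasEigenvalue_iff_isRoot_charpoly, ← LinearMap.charpoly_toMatrix _
      (Pi.basisFun ℂ (Fin k)), LinearMap.toMatrix_eq_toMatrix', hlam, Polynomial.IsRoot.def,
      Polynomial.eval_prod, Finset.prod_eq_zero_iff] at hμ
    obtain ⟨j, -, hj⟩ := hμ
    exact ⟨j, by simpa [sub_eq_zero] using hj⟩
  obtain ⟨σ, hσ0, hσ⟩ := exists_sigma hPoincare
  have hspec : ∀ t ∈ spectrum ℂ (ContinuousLinearMap.id ℂ (Fin k → ℂ) + σ • L), ‖t‖ < 1 := by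
    intro t ht
    obtain ⟨v, hv⟩ := (hasEigenvalue_of_mem_spectrum ht).exists_hasEigenvector
    have h1 : v + σ • L v = t • v := hv.apply_eq_smul
    obtain ⟨j, hj⟩ := heig ((t - 1) / σ) (Module.End.hasEigenvalue_of_hasEigenvector (x := v)
      ⟨Module.End.mem_eigenspace_iff.mpr (by
        rw [ContinuousLinearMap.coe_coe, div_eq_inv_mul, mul_smul, sub_smul, one_smul, ← h1,
          add_sub_cancel_left, smul_smul, inv_mul_cancel₀ hσ0, one_smul]), hv.2⟩)
    have h2 : t = 1 + σ * lam j := by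
      rw [← hj]; field_simp; ring
    rw [h2]
    exact hσ j
  have hres : ∀ n : ℕ, 2 ≤ n → ∀ μ : Fin n → ℂ,
      (∀ i, Module.End.HasEigenvalue (L : (Fin k → ℂ) →ₗ[ℂ] (Fin k → ℂ)) (μ i)) →
      ∀ ν, Module.End.HasEigenvalue (L : (Fin k → ℂ) →ₗ[ℂ] (Fin k → ℂ)) ν → ∑ i, μ i ≠ ν := by
    intro n hn μ hμ ν hν
    choose g hg using fun i => heig _ (hμ i)
    obtain ⟨j, rfl⟩ := heig ν hν
    -- The multi-index counts how many times each `lam i` occurs among the `μ a`.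
    have hcard : ∑ i, (Finset.univ.filter fun a => g a = i).card = n := by
      rw [← Finset.card_eq_sum_card_fiberwise (fun a _ => Finset.mem_coe.mpr (Finset.mem_univ _))]
      simp
    have h1 := hNonres (fun i => (Finset.univ.filter fun a => g a = i).card) (hcard.symm ▸ hn) j
    convert h1 using 1
    rw [← Finset.sum_fiberwise Finset.univ g μ]
    refine Finset.sum_congr rfl fun i _ => ?_
    rw [Finset.sum_congr rfl (g := fun _ => lam i), Finset.sum_const, nsmul_eq_mul]
    intro a ha
    rw [hg a, (Finset.mem_filter.mp ha).2]
  obtain ⟨φ, hφa, hφ0, hφd, hφ⟩ := linearization_of_spectrum hX hX0 hL.symm hspec hres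
  exact ⟨{z | AnalyticAt ℂ φ z ∧ fderiv ℂ φ z (L z) = X (φ z)}, φ,
    hφa.eventually_analyticAt.and hφ, fun z hz => hz.1, hφ0, hφd, fun z hz => hz.2⟩
end

section
/- Let φ : ℂ → ℂ^N be a nonconstant entire map. With A(r) = ∫_{|ζ|<r} ‖φ'(ζ)‖² dλ(ζ) and L(r) = r·∫_0^{2π} ‖φ'(r e^{iθ})‖ dθ, one has liminf_{r → ∞} L(r)/A(r) = 0; in particular there is a sequence r_i → ∞ with L(r_i)/A(r_i) → 0. -/
open MeasureTheory Filter

/-!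
The proof is Ahlfors' length–area argument. Write `M(t) = ∫₀^{2π} ‖φ'(t e^{iθ})‖² dθ`. In polar
coordinates `A(r) = ∫₀^r t M(t) dt` (`area_eq_polar`), so `A` is differentiable with
`A'(r) = r M(r)`, and the Cauchy–Schwarz inequality on the circle (`sq_integral_le`) gives
`L(r)² ≤ 2π r A'(r)`.

If `L ≥ c A` with `c > 0` held on a half-line `[R, ∞)` with `A > 0`, then
`(-1/A)' = A'/A² ≥ c²/(2π r)` there. Integrating, `-1/A(r) - (c²/2π) log r` would be nondecreasing,
which is absurd since `-1/A < 0` while `log r → ∞` (`not_log_growth`). Hence `L/A` takes values below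
any `c > 0` at arbitrarily large radii; as `L/A ≥ 0`, both claims follow.
-/

/-- Cauchy–Schwarz on the circle, in the form `(∫ f · 1)² ≤ (∫ 1)(∫ f²)`. -/
lemma sq_integral_le {f : ℝ → ℝ} (hf : Continuous f) :
    (∫ θ in (0 : ℝ)..(2 * Real.pi), f θ) ^ 2
      ≤ 2 * Real.pi * ∫ θ in (0 : ℝ)..(2 * Real.pi), f θ ^ 2 := by
  have hpi := Real.pi_pos
  set I := ∫ θ in (0 : ℝ)..(2 * Real.pi), f θ with hI
  set m := I / (2 * Real.pi) with hm
  -- Integrate the nonnegative function `(f - m)²`, where `m` is the mean of `f`.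
  have h0 : 0 ≤ ∫ θ in (0 : ℝ)..(2 * Real.pi), (f θ - m) ^ 2 :=
    intervalIntegral.integral_nonneg (by positivity) fun _ _ => sq_nonneg _
  have h1 : (∫ θ in (0 : ℝ)..(2 * Real.pi), (f θ - m) ^ 2)
      = (∫ θ in (0 : ℝ)..(2 * Real.pi), f θ ^ 2) - 2 * m * I + 2 * Real.pi * m ^ 2 := by
    have : ∀ θ, (f θ - m) ^ 2 = f θ ^ 2 - 2 * m * f θ + m ^ 2 := fun θ => by ring
    simp_rw [this]
    rw [intervalIntegral.integral_add, intervalIntegral.integral_sub,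
      intervalIntegral.integral_const_mul, intervalIntegral.integral_const]
    · simp [hI]
    all_goals exact Continuous.intervalIntegrable (by fun_prop) _ _
  have hIm : I = 2 * Real.pi * m := by rw [hm]; field_simp
  rw [h1] at h0
  have h2 := mul_nonneg (by positivity : 0 ≤ 2 * Real.pi) h0
  rw [hIm] at h2 ⊢
  nlinarith

/-- The integral of a continuous function over a disc, in polar coordinates. -/
lemma area_eq_polar {g : ℂ → ℝ} (hg : Continuous g) {r : ℝ} (hr : 0 ≤ r) :
    ∫ ζ in Metric.ball (0 : ℂ) r, g ζ = ∫ t in (0 : ℝ)..r, t *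
      ∫ θ in (0 : ℝ)..(2 * Real.pi), g ((t : ℂ) * Complex.exp ((θ : ℂ) * Complex.I)) := by
  have hsymm : ∀ p : ℝ × ℝ, Complex.polarCoord.symm p
      = (p.1 : ℂ) * Complex.exp ((p.2 : ℂ) * Complex.I) := fun p => by
    rw [Complex.polarCoord_symm_apply, Complex.exp_mul_I]
    push_cast
    rfl
  -- `polarCoord` uses angles in `(-π, π)`; periodicity moves them to `(0, 2π)`.
  have hper : ∀ t : ℝ, (∫ θ in (0 : ℝ)..(2 * Real.pi),
      g ((t : ℂ) * Complex.exp ((θ : ℂ) * Complex.I)))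
      = ∫ θ in Set.Ioo (-Real.pi) Real.pi,
        g ((t : ℂ) * Complex.exp ((θ : ℂ) * Complex.I)) := fun t => by
    have hp : Function.Periodic
        (fun θ : ℝ => g ((t : ℂ) * Complex.exp ((θ : ℂ) * Complex.I))) (2 * Real.pi) := by
      intro θ
      have : (((θ + 2 * Real.pi : ℝ)) : ℂ) * Complex.I
          = (θ : ℂ) * Complex.I + 2 * Real.pi * Complex.I := by push_cast; ring
      simp only [this, Complex.exp_periodic _]
    have h := hp.intervalIntegral_add_eq 0 (-Real.pi)
    rw [zero_add, show -Real.pi + 2 * Real.pi = Real.pi by ring] at h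
    rw [h, intervalIntegral.integral_of_le (by linarith [Real.pi_pos]),
      integral_Ioc_eq_integral_Ioo]
  have hcont : Continuous fun p : ℝ × ℝ =>
      p.1 * g ((p.1 : ℂ) * Complex.exp ((p.2 : ℂ) * Complex.I)) := by fun_prop
  rw [← integral_indicator Metric.isOpen_ball.measurableSet,
    ← Complex.integral_comp_polarCoord_symm, intervalIntegral.integral_of_le hr,
    integral_Ioc_eq_integral_Ioo]
  simp_rw [hper, ← integral_const_mul]
  have hprod := setIntegral_prod (μ := (volume : Measure ℝ)) (ν := (volume : Measure ℝ))
    (s := Set.Ioo 0 r) (t := Set.Ioo (-Real.pi) Real.pi)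
    (fun p : ℝ × ℝ => p.1 * g ((p.1 : ℂ) * Complex.exp ((p.2 : ℂ) * Complex.I)))
    ((hcont.continuousOn.integrableOn_compact (isCompact_Icc.prod isCompact_Icc)).mono_set
      (Set.prod_mono Set.Ioo_subset_Icc_self Set.Ioo_subset_Icc_self))
  rw [← hprod, ← Measure.volume_eq_prod, polarCoord_target,
    ← integral_indicator (measurableSet_Ioi.prod measurableSet_Ioo),
    ← integral_indicator (measurableSet_Ioo.prod measurableSet_Ioo)]
  congr 1
  ext p
  simp only [Set.indicator, Set.mem_prod, Set.mem_Ioi, Set.mem_Ioo, hsymm, mem_ball_zero_iff,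
    norm_mul, Complex.norm_exp_ofReal_mul_I, mul_one, Complex.norm_real, Real.norm_eq_abs,
    smul_eq_mul]
  by_cases h1 : 0 < p.1
  · rw [abs_of_pos h1]
    split_ifs <;> first | rfl | exact mul_zero _ | tauto
  · simp [h1]

/-- A positive function on a half-line cannot satisfy `k A² ≤ r A'` with `k > 0`: integrating
`k / r ≤ (-1/A)'` would make `-1/A` grow at least like `k log r`. -/
lemma not_log_growth {A A' : ℝ → ℝ} {k R : ℝ} (hk : 0 < k) (hR : 0 < R)
    (hpos : ∀ r, R ≤ r → 0 < A r)
    (hder : ∀ r, R < r → HasDerivAt A (A' r) r)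
    (hcont : ContinuousOn A (Set.Ici R))
    (hineq : ∀ r, R < r → k * A r ^ 2 ≤ r * A' r) : False := by
  have hmono : MonotoneOn (fun r => -(A r)⁻¹ - k * Real.log r) (Set.Ici R) := by
    refine monotoneOn_of_hasDerivWithinAt_nonneg (f' := fun r => A' r / A r ^ 2 - k * r⁻¹)
      (convex_Ici R) ?_ ?_ ?_
    · refine ((hcont.inv₀ fun r hr => (hpos r hr).ne').neg).sub
        (continuousOn_const.mul (Real.continuousOn_log.mono ?_))
      intro r hr
      exact (hR.trans_le hr).ne'
    · intro r hr
      rw [interior_Ici, Set.mem_Ioi] at hr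
      have h1 := ((hder r hr).inv (hpos r hr.le).ne').neg
      have h2 := (Real.hasDerivAt_log (hR.trans hr).ne').const_mul k
      refine ((h1.sub h2).congr_deriv ?_).hasDerivWithinAt
      ring
    · intro r hr
      rw [interior_Ici, Set.mem_Ioi] at hr
      have hA := hpos r hr.le
      have hr0 := hR.trans hr
      rw [sub_nonneg, ← div_eq_mul_inv, div_le_div_iff₀ hr0 (by positivity)]
      linarith [hineq r hr]
  have hlog := (Real.tendsto_log_atTop.const_mul_atTop hk).eventually_gt_atTop
    ((A R)⁻¹ + k * Real.log R)
  obtain ⟨r, hr, hRr⟩ := (hlog.and (eventually_ge_atTop R)).exists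
  have h := hmono (Set.mem_Ici.2 le_rfl) (Set.mem_Ici.2 hRr) hRr
  have := inv_pos.2 (hpos r hRr)
  simp only at h
  linarith

/-- **Ahlfors' length–area argument.** For a nonconstant entire map `φ : ℂ → ℂᴺ`, with
`A(r)` the area (with multiplicity) of `φ(Δ_r)` and `L(r)` the length (with multiplicity)
of `φ(∂Δ_r)`, one has `liminf_{r→∞} L(r)/A(r) = 0`; in particular there is a sequence
`r_i → ∞` with `L(r_i)/A(r_i) → 0`. -/
theorem ahlfors_liminf_length_over_area
    (N : ℕ) (φ : ℂ → EuclideanSpace ℂ (Fin N)) (hφ : Differentiable ℂ φ)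
    (hnc : ∃ a b : ℂ, φ a ≠ φ b)
    (A L : ℝ → ℝ)
    (hA : ∀ r : ℝ, A r = ∫ ζ in Metric.ball (0 : ℂ) r, ‖deriv φ ζ‖ ^ 2)
    (hL : ∀ r : ℝ, L r = r * ∫ θ in (0 : ℝ)..(2 * Real.pi),
      ‖deriv φ ((r : ℂ) * Complex.exp ((θ : ℂ) * Complex.I))‖) :
    liminf (fun r : ℝ => L r / A r) atTop = 0 ∧
    ∃ s : ℕ → ℝ, Tendsto s atTop atTop ∧
      Tendsto (fun i => L (s i) / A (s i)) atTop (nhds 0) := by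
  have hd : Continuous (deriv φ) := (hφ.contDiff (n := 1)).continuous_deriv le_rfl
  have hA0 : ∀ r, 0 ≤ A r := fun r => by
    rw [hA]; exact integral_nonneg fun _ => sq_nonneg _
  have hL0 : ∀ r, 0 ≤ r → 0 ≤ L r := fun r hr => by
    rw [hL]
    exact mul_nonneg hr (intervalIntegral.integral_nonneg (by positivity)
      fun _ _ => norm_nonneg _)
  have hQ0 : ∀ᶠ r in atTop, 0 ≤ L r / A r := by
    filter_upwards [eventually_ge_atTop 0] with r hr
    exact div_nonneg (hL0 r hr) (hA0 r)
  set M : ℝ → ℝ := fun t => ∫ θ in (0 : ℝ)..(2 * Real.pi),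
    ‖deriv φ ((t : ℂ) * Complex.exp ((θ : ℂ) * Complex.I))‖ ^ 2 with hM
  have hMc : Continuous M :=
    intervalIntegral.continuous_parametric_intervalIntegral_of_continuous' (by fun_prop) _ _
  have hAr : ∀ r, 0 ≤ r → A r = ∫ t in (0 : ℝ)..r, t * M t := fun r hr => by
    rw [hA]
    exact area_eq_polar (g := fun ζ => ‖deriv φ ζ‖ ^ 2) (by fun_prop) hr
  have hder : ∀ r, 0 < r → HasDerivAt A (r * M r) r := fun r hr => by
    refine ((continuous_id.mul hMc).integral_hasStrictDerivAt 0 r).hasDerivAt.congr_of_eventuallyEq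
      ?_
    filter_upwards [eventually_gt_nhds hr] with x hx
    exact hAr x hx.le
  have hCS : ∀ r, L r ^ 2 ≤ 2 * Real.pi * (r * (r * M r)) := fun r => by
    have h := sq_integral_le
      (f := fun θ : ℝ => ‖deriv φ ((r : ℂ) * Complex.exp ((θ : ℂ) * Complex.I))‖) (by fun_prop)
    have h' := mul_le_mul_of_nonneg_left h (sq_nonneg r)
    rw [hL, mul_pow]
    refine h'.trans_eq ?_
    rw [hM]
    ring
  have key : ∀ c : ℝ, 0 < c → ∃ᶠ r in atTop, L r / A r < c := by
    intro c hc hev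
    simp only [not_lt] at hev
    obtain ⟨R, hR⟩ := eventually_atTop.1 (hev.and (eventually_gt_atTop 0))
    have hR0 : 0 < R := (hR R le_rfl).2
    -- Division by zero gives `0 < c`, so `c ≤ L r / A r` forces `A r ≠ 0`.
    have hpos : ∀ r, R ≤ r → 0 < A r := fun r hr => by
      refine (hA0 r).lt_of_ne fun h => ?_
      have := (hR r hr).1
      rw [← h, div_zero] at this
      linarith
    refine not_log_growth (A := A) (A' := fun r => r * M r) (k := c ^ 2 / (2 * Real.pi))
      (by positivity) hR0 hpos (fun r hr => hder r (hR0.trans hr))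
      (fun r hr => (hder r (hR0.trans_le hr)).continuousAt.continuousWithinAt) fun r hr => ?_
    have h1 : c * A r ≤ L r := (le_div_iff₀ (hpos r hr.le)).1 (hR r hr.le).1
    have h2 : (c * A r) ^ 2 ≤ L r ^ 2 := pow_le_pow_left₀ (mul_nonneg hc.le (hA0 r)) h1 2
    rw [div_mul_eq_mul_div, div_le_iff₀ (by positivity)]
    linarith [hCS r, mul_pow c (A r) 2]
  constructor
  · have hcob : IsCoboundedUnder (· ≥ ·) atTop fun r : ℝ => L r / A r :=
      IsCoboundedUnder.of_frequently_le ((key 1 one_pos).mono fun _ h => h.le)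
    have hbdd : IsBoundedUnder (· ≥ ·) atTop fun r : ℝ => L r / A r := ⟨0, hQ0⟩
    refine le_antisymm (le_of_forall_pos_le_add fun c hc => ?_) (le_liminf_of_le hcob hQ0)
    rw [zero_add]
    exact liminf_le_of_frequently_le ((key c hc).mono fun _ h => h.le) hbdd
  · have hex : ∀ n : ℕ, ∃ r : ℝ, (n : ℝ) ≤ r ∧ L r / A r < 1 / ((n : ℝ) + 1) := fun n => by
      obtain ⟨r, h1, h2⟩ := ((key (1 / ((n : ℝ) + 1)) (by positivity)).and_eventually
        (eventually_ge_atTop (n : ℝ))).exists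
      exact ⟨r, h2, h1⟩
    choose s hs hs' using hex
    refine ⟨s, tendsto_atTop_mono hs tendsto_natCast_atTop_atTop, ?_⟩
    refine squeeze_zero (fun n => div_nonneg (hL0 _ ((Nat.cast_nonneg n).trans (hs n))) (hA0 _))
      (fun n => (hs' n).le) tendsto_one_div_add_atTop_nhds_zero_nat
end

section
/- (Dense leaves in Grauert's Levi-flat example.) Let L₁ = ℤ + ℤ·i and L₂ = ℤ + √2·ℤ·i be lattices in ℂ. Then the closure in ℂ × ℂ of the set {(z + ω₁, z + ω₂) : z ∈ ℂ, ω₁ ∈ L₁, ω₂ ∈ L₂} equals {(z, w) ∈ ℂ² : Re(z − w) ∈ ℤ}. Equivalently, the leaf through the origin of the Levi-flat hypersurface S = {Re(z − w) = 0} in the product of tori T₁ × T₂ = (ℂ/L₁) × (ℂ/L₂) is dense in S. -/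
/-!
The difference of the two coordinates of a point of the leaf has real part in `ℤ` and imaginary
part in the group `ℤ + ℤ√2`. The first condition is closed, which gives one inclusion. For the
other, `ℤ + ℤ√2` is dense in `ℝ` because `√2` is irrational, so a point `(z, w)` with
`Re (z - w) = n` is the limit of the points `(w + n + s * I, w)` of the leaf as `s ∈ ℤ + ℤ√2` tends
to `Im (z - w)`.
-/

/-- **Dense leaves in Grauert's Levi-flat example.** With the lattices `L₁ = ℤ + ℤi` and
`L₂ = ℤ + √2·ℤi`, the closure in `ℂ × ℂ` of `{(z + ω₁, z + ω₂) : z ∈ ℂ, ω₁ ∈ L₁, ω₂ ∈ L₂}`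
(the lift of the leaf through the origin of `{Re(z − w) = 0} ⊆ (ℂ/L₁) × (ℂ/L₂)`)
is `{(z, w) : Re(z − w) ∈ ℤ}` (the lift of the Levi-flat hypersurface). -/
theorem grauert_leaf_dense :
    closure {p : ℂ × ℂ | ∃ (z : ℂ) (a b a' b' : ℤ),
        p = (z + ((a : ℂ) + (b : ℂ) * Complex.I),
             z + ((a' : ℂ) + (b' : ℂ) * (Real.sqrt 2 : ℂ) * Complex.I))} =
      {p : ℂ × ℂ | ∃ n : ℤ, (p.1 - p.2).re = (n : ℝ)} := by
  apply Set.Subset.antisymm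
  · apply closure_minimal
    · rintro _ ⟨z, a, b, a', b', rfl⟩
      exact ⟨a - a', by simp⟩
    · have hcl : IsClosed (Set.range ((↑) : ℤ → ℝ)) := Int.isClosedEmbedding_coe_real.isClosed_range
      have hcont : Continuous fun p : ℂ × ℂ => (p.1 - p.2).re := by fun_prop
      convert hcl.preimage hcont using 1
      ext p
      simp [eq_comm]
  · rintro ⟨z, w⟩ ⟨n, hn⟩
    have hdense : Dense (AddSubgroup.closure {Real.sqrt 2, 1} : Set ℝ) :=
      dense_addSubgroupClosure_pair_iff.2 (by simpa using irrational_sqrt_two)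
    have hcont : Continuous fun s : ℝ => ((w + n + s * Complex.I, w) : ℂ × ℂ) := by fun_prop
    have hzw : (z, w) = ((w + n + ((z - w).im : ℝ) * Complex.I, w) : ℂ × ℂ) := by
      simp only [Complex.sub_re] at hn
      refine Prod.ext (Complex.ext ?_ ?_) rfl
      · simp
        linarith
      · simp
    rw [hzw]
    refine map_mem_closure (f := fun s : ℝ => ((w + n + s * Complex.I, w) : ℂ × ℂ)) hcont
      (hdense (z - w).im) ?_
    intro s hs
    obtain ⟨k, b, rfl⟩ := AddSubgroup.mem_closure_pair.1 hs
    -- The lattice component `k * √2 * I` is moved from the first coordinate to the second.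
    refine ⟨w + k * (Real.sqrt 2 : ℂ) * Complex.I, n, b, 0, -k, ?_⟩
    ext1
    · simp
      ring
    · simp
end
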